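/- In the critical case (r_n → 1 - 1/m), setting v_n := r_n - (1 - 1/m), one has: lim_{n→∞} n v_n = 2/m, lim_{n→∞} n^2 (v_n - v_{n+1}) = 2/m, and lim_{n→∞} (m/2) n^2 v_n v_{n+1} = 2/m. -/

import Mathlib

open Filter Finset Topology

/-!
Write `q = 1 - p`. The recursion gives
`v n - v (n + 1) = (m - 1) * r (n + 1) * q n`, and the difference quotient of `q` along `v` is
`(m * v (n + 1) + (m - 1) * q n) / ((m - 1) * r n)`, which tends to `0`. By Stolz–Cesàro `q = o(v)`.
Hence consecutive values of `v` are asymptotically equal, and a second application of Stolz–Cesàro,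
now against `v ^ 2`, gives `q ∼ (m / (m - 1)) ^ 2 / 2 * v ^ 2`. So
`v n - v (n + 1) ∼ m / 2 * v n ^ 2`, and `1 / v` grows linearly with slope `m / 2`.
-/

section StolzCesaro

lemma eventually_le_of_tendsto_of_eventually_le_succ {α : Type*} [TopologicalSpace α] [Preorder α]
    [ClosedIciTopology α] {u : ℕ → α} {a : α} (hu : Tendsto u atTop (𝓝 a))
    (hle : ∀ᶠ n in atTop, u n ≤ u (n + 1)) : ∀ᶠ n in atTop, u n ≤ a := by
  obtain ⟨N, hN⟩ := eventually_atTop.1 hle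
  have hmono : MonotoneOn u (Set.Ici N) := monotoneOn_nat_Ici_of_le_succ hN
  filter_upwards [eventually_ge_atTop N] with n hn
  refine ge_of_tendsto hu ?_
  filter_upwards [eventually_ge_atTop n] with k hk
  exact hmono hn (hn.trans hk) hk

lemma lt_of_strictAnti_of_tendsto {α : Type*} [TopologicalSpace α] [Preorder α]
    [OrderClosedTopology α] {u : ℕ → α} {a : α} (hu : StrictAnti u)
    (ha : Tendsto u atTop (𝓝 a)) (n : ℕ) : a < u n :=
  (hu.antitone.le_of_tendsto ha (n + 1)).trans_lt (hu n.lt_succ_self)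

variable {𝕜 : Type*} [Field 𝕜] [LinearOrder 𝕜] [IsStrictOrderedRing 𝕜] [TopologicalSpace 𝕜]
  [OrderTopology 𝕜] {x y : ℕ → 𝕜}

lemma eventually_div_le_of_eventually_sub_div_sub_le {b : 𝕜} (hx : Tendsto x atTop (𝓝 0))
    (hy : Tendsto y atTop (𝓝 0)) (hanti : StrictAnti y)
    (hb : ∀ᶠ n in atTop, (x n - x (n + 1)) / (y n - y (n + 1)) ≤ b) :
    ∀ᶠ n in atTop, x n / y n ≤ b := by
  have hlim : Tendsto (fun n => x n - b * y n) atTop (𝓝 0) := by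
    simpa using hx.sub (hy.const_mul b)
  have hle : ∀ᶠ n in atTop, x n - b * y n ≤ x (n + 1) - b * y (n + 1) := by
    filter_upwards [hb] with n hn
    rw [div_le_iff₀ (sub_pos.2 (hanti n.lt_succ_self))] at hn
    linarith
  filter_upwards [eventually_le_of_tendsto_of_eventually_le_succ hlim hle] with n hn
  rw [div_le_iff₀ (lt_of_strictAnti_of_tendsto hanti hy n)]
  exact sub_nonpos.1 hn

/-- The `0 / 0` case of the Stolz–Cesàro theorem. -/
theorem tendsto_div_of_tendsto_sub_div_sub {L : 𝕜} (hx : Tendsto x atTop (𝓝 0))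
    (hy : Tendsto y atTop (𝓝 0)) (hanti : StrictAnti y)
    (h : Tendsto (fun n => (x n - x (n + 1)) / (y n - y (n + 1))) atTop (𝓝 L)) :
    Tendsto (fun n => x n / y n) atTop (𝓝 L) := by
  refine tendsto_order.2 ⟨fun a ha => ?lower, fun a ha => ?upper⟩
  case upper =>
    obtain ⟨b, hLb, hba⟩ := exists_between ha
    filter_upwards [eventually_div_le_of_eventually_sub_div_sub_le hx hy hanti
      (h.eventually_le_const hLb)] with n hn
    exact hn.trans_lt hba
  case lower =>
    obtain ⟨b, hab, hbL⟩ := exists_between ha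
    have hneg : ∀ᶠ n in atTop, (-x n - -x (n + 1)) / (y n - y (n + 1)) ≤ -b := by
      filter_upwards [h.eventually_const_le hbL] with n hn
      rwa [← neg_sub', neg_div, neg_le_neg_iff]
    filter_upwards [eventually_div_le_of_eventually_sub_div_sub_le (by simpa using hx.neg) hy hanti
      hneg] with n hn
    rw [neg_div, neg_le_neg_iff] at hn
    exact hab.trans_le hn

end StolzCesaro

section HarmonicDecay

lemma tendsto_inv_smul_of_tendsto_succ_sub {E : Type*} [NormedAddCommGroup E] [NormedSpace ℝ E]
    {u : ℕ → E} {L : E} (h : Tendsto (fun n => u (n + 1) - u n) atTop (𝓝 L)) :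
    Tendsto (fun n : ℕ => (n : ℝ)⁻¹ • u n) atTop (𝓝 L) := by
  have hconst : Tendsto (fun n : ℕ => (n : ℝ)⁻¹ • u 0) atTop (𝓝 0) := by
    simpa using (tendsto_inv_atTop_nhds_zero_nat (𝕜 := ℝ)).smul_const (u 0)
  have hsum := h.cesaro_smul.add hconst
  rw [add_zero] at hsum
  refine hsum.congr fun n => ?_
  rw [sum_range_sub, ← smul_add, sub_add_cancel]

variable {v : ℕ → ℝ} {a L : ℝ}

lemma tendsto_natCast_mul_of_tendsto_sub_div_mul (hv : ∀ n, v n ≠ 0) (hL : L ≠ 0)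
    (h : Tendsto (fun n => (v n - v (n + 1)) / (v n * v (n + 1))) atTop (𝓝 L)) :
    Tendsto (fun n : ℕ => n * v n) atTop (𝓝 L⁻¹) := by
  have hinv : Tendsto (fun n => (v (n + 1))⁻¹ - (v n)⁻¹) atTop (𝓝 L) :=
    h.congr fun n => by rw [inv_sub_inv (hv _) (hv _), mul_comm (v n)]
  simpa [mul_comm] using (tendsto_inv_smul_of_tendsto_succ_sub (u := v⁻¹) hinv).inv₀ hL

lemma tendsto_natCast_sq_mul_mul_succ (h : Tendsto (fun n : ℕ => n * v n) atTop (𝓝 a)) :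
    Tendsto (fun n : ℕ => (n : ℝ) ^ 2 * (v n * v (n + 1))) atTop (𝓝 (a ^ 2)) := by
  have hsucc : Tendsto (fun n : ℕ => ((n + 1 : ℕ) : ℝ) * v (n + 1)) atTop (𝓝 a) :=
    h.comp (tendsto_add_atTop_nat 1)
  have hprod := (h.mul hsucc).mul (tendsto_natCast_div_add_atTop (1 : ℝ))
  rw [mul_one, ← sq] at hprod
  refine hprod.congr fun n => ?_
  push_cast
  field_simp

lemma tendsto_natCast_sq_mul_sub_of_tendsto_sub_div_mul (hv : ∀ n, v n ≠ 0) (hL : L ≠ 0)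
    (h : Tendsto (fun n => (v n - v (n + 1)) / (v n * v (n + 1))) atTop (𝓝 L)) :
    Tendsto (fun n : ℕ => (n : ℝ) ^ 2 * (v n - v (n + 1))) atTop (𝓝 L⁻¹) := by
  have hprod := (tendsto_natCast_sq_mul_mul_succ
    (tendsto_natCast_mul_of_tendsto_sub_div_mul hv hL h)).mul h
  rw [show L⁻¹ ^ 2 * L = L⁻¹ by field_simp] at hprod
  refine hprod.congr fun n => ?_
  rw [mul_assoc, mul_div_cancel₀ _ (mul_ne_zero (hv n) (hv (n + 1)))]

end HarmonicDecay

/-- The pair `(r, p)` is an orbit of the planar recursion with parameter `m > 1`. The state space is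
the quadrant `0 < r`, `p < 1`, on which the two denominators are positive. -/
structure IsOrbit (m : ℝ) (r p : ℕ → ℝ) : Prop where
  one_lt : 1 < m
  r_pos : ∀ n, 0 < r n
  p_lt_one : ∀ n, p n < 1
  r_succ : ∀ n, r (n + 1) = r n / (m - (m - 1) * p n)
  p_succ : ∀ n, p (n + 1) = 1 - (1 - r (n + 1)) * (1 - r (n + 1) * p n / r n)

/-- The distance `v n` of `r n` above its critical limit `1 - 1 / m`. -/
noncomputable def excess (m : ℝ) (r : ℕ → ℝ) (n : ℕ) : ℝ := r n - (1 - 1 / m)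

lemma tendsto_excess {m : ℝ} {r : ℕ → ℝ} (hr : Tendsto r atTop (𝓝 (1 - 1 / m))) :
    Tendsto (excess m r) atTop (𝓝 0) :=
  tendsto_sub_nhds_zero_iff.2 hr

namespace IsOrbit

variable {m : ℝ} {r p : ℕ → ℝ}

lemma m_pos (h : IsOrbit m r p) : 0 < m :=
  zero_lt_one.trans h.one_lt

lemma m_sub_one_pos (h : IsOrbit m r p) : 0 < m - 1 :=
  sub_pos.2 h.one_lt

lemma denom_pos (h : IsOrbit m r p) (n : ℕ) : 0 < m - (m - 1) * p n := by
  linarith [mul_pos h.m_sub_one_pos (sub_pos.2 (h.p_lt_one n))]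

lemma r_succ_mul_denom (h : IsOrbit m r p) (n : ℕ) :
    r (n + 1) * (m - (m - 1) * p n) = r n :=
  (eq_div_iff (h.denom_pos n).ne').1 (h.r_succ n)

lemma one_sub_p_succ_mul_denom (h : IsOrbit m r p) (n : ℕ) :
    (1 - p (n + 1)) * (m - (m - 1) * p n) = m * (1 - r (n + 1)) * (1 - p n) := by
  have hratio : r (n + 1) * p n / r n = p n / (m - (m - 1) * p n) := by
    rw [← h.r_succ_mul_denom n, mul_div_mul_left _ _ (h.r_pos (n + 1)).ne']
  rw [h.p_succ, hratio, sub_sub_cancel, mul_assoc, sub_mul 1 (p n / _),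
    div_mul_cancel₀ _ (h.denom_pos n).ne']
  ring

lemma excess_sub_excess_succ (h : IsOrbit m r p) (n : ℕ) :
    excess m r n - excess m r (n + 1) = (m - 1) * r (n + 1) * (1 - p n) := by
  unfold excess
  linear_combination -h.r_succ_mul_denom n

lemma strictAnti_excess (h : IsOrbit m r p) : StrictAnti (excess m r) :=
  strictAnti_nat_of_succ_lt fun n => by
    rw [← sub_pos, h.excess_sub_excess_succ]
    exact mul_pos (mul_pos h.m_sub_one_pos (h.r_pos _)) (sub_pos.2 (h.p_lt_one n))

lemma one_sub_p_sub_div_excess_sub (h : IsOrbit m r p) (n : ℕ) :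
    ((1 - p n) - (1 - p (n + 1))) / (excess m r n - excess m r (n + 1)) =
      (m * excess m r (n + 1) + (m - 1) * (1 - p n)) / ((m - 1) * r n) := by
  have hm := h.m_pos.ne'
  have hm_excess : m * excess m r (n + 1) = m * r (n + 1) - (m - 1) := by
    unfold excess
    field_simp
  rw [div_eq_div_iff (sub_pos.2 (h.strictAnti_excess n.lt_succ_self)).ne'
    (mul_pos h.m_sub_one_pos (h.r_pos n)).ne', h.excess_sub_excess_succ, hm_excess,
    ← h.r_succ_mul_denom n]
  linear_combination -((m - 1) * r (n + 1)) * h.one_sub_p_succ_mul_denom n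

lemma excess_pos (h : IsOrbit m r p) (hr : Tendsto r atTop (𝓝 (1 - 1 / m))) (n : ℕ) :
    0 < excess m r n :=
  lt_of_strictAnti_of_tendsto h.strictAnti_excess (tendsto_excess hr) n

lemma tendsto_m_sub_one_mul_r (h : IsOrbit m r p) (hr : Tendsto r atTop (𝓝 (1 - 1 / m))) :
    Tendsto (fun n => (m - 1) * r n) atTop (𝓝 ((m - 1) ^ 2 / m)) := by
  have hm := h.m_pos.ne'
  convert hr.const_mul (m - 1) using 2
  field_simp

lemma m_sub_one_sq_div_pos (h : IsOrbit m r p) : 0 < (m - 1) ^ 2 / m :=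
  div_pos (pow_pos h.m_sub_one_pos 2) h.m_pos

lemma tendsto_one_sub_p (h : IsOrbit m r p) (hr : Tendsto r atTop (𝓝 (1 - 1 / m))) :
    Tendsto (fun n => 1 - p n) atTop (𝓝 0) := by
  have hv := tendsto_excess hr
  have hquot := (hv.sub (hv.comp (tendsto_add_atTop_nat 1))).div
    ((h.tendsto_m_sub_one_mul_r hr).comp (tendsto_add_atTop_nat 1)) h.m_sub_one_sq_div_pos.ne'
  rw [sub_zero, zero_div] at hquot
  refine hquot.congr fun n => ?_
  simp only [Pi.div_apply, Function.comp_apply, h.excess_sub_excess_succ]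
  exact mul_div_cancel_left₀ _ (mul_pos h.m_sub_one_pos (h.r_pos _)).ne'

lemma tendsto_one_sub_p_div_excess (h : IsOrbit m r p)
    (hr : Tendsto r atTop (𝓝 (1 - 1 / m))) :
    Tendsto (fun n => (1 - p n) / excess m r n) atTop (𝓝 0) := by
  refine tendsto_div_of_tendsto_sub_div_sub (h.tendsto_one_sub_p hr) (tendsto_excess hr)
    h.strictAnti_excess ?_
  simp only [h.one_sub_p_sub_div_excess_sub]
  have hv_succ := (tendsto_excess hr).comp (tendsto_add_atTop_nat 1)
  have hnum := (hv_succ.const_mul m).add ((h.tendsto_one_sub_p hr).const_mul (m - 1))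
  simpa [Pi.div_def] using hnum.div (h.tendsto_m_sub_one_mul_r hr) h.m_sub_one_sq_div_pos.ne'

lemma tendsto_excess_succ_div_excess (h : IsOrbit m r p)
    (hr : Tendsto r atTop (𝓝 (1 - 1 / m))) :
    Tendsto (fun n => excess m r (n + 1) / excess m r n) atTop (𝓝 1) := by
  have hlim := (((h.tendsto_m_sub_one_mul_r hr).comp (tendsto_add_atTop_nat 1)).mul
    (h.tendsto_one_sub_p_div_excess hr)).const_sub 1
  rw [mul_zero, sub_zero] at hlim
  refine hlim.congr fun n => ?_
  rw [Function.comp_apply, ← mul_div_assoc, ← h.excess_sub_excess_succ,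
    one_sub_div (h.excess_pos hr n).ne', sub_sub_cancel]

lemma tendsto_one_sub_p_div_excess_sq (h : IsOrbit m r p)
    (hr : Tendsto r atTop (𝓝 (1 - 1 / m))) :
    Tendsto (fun n => (1 - p n) / excess m r n ^ 2) atTop (𝓝 ((m / (m - 1)) ^ 2 / 2)) := by
  have hpos := h.excess_pos hr
  have hanti : StrictAnti fun n => excess m r n ^ 2 := fun _ k hk =>
    pow_lt_pow_left₀ (h.strictAnti_excess hk) (hpos k).le two_ne_zero
  refine tendsto_div_of_tendsto_sub_div_sub (h.tendsto_one_sub_p hr)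
    (by simpa using (tendsto_excess hr).pow 2) hanti ?_
  have hratio := h.tendsto_excess_succ_div_excess hr
  have hnum := (hratio.const_mul m).add ((h.tendsto_one_sub_p_div_excess hr).const_mul (m - 1))
  have hden := (hratio.const_add 1).mul (h.tendsto_m_sub_one_mul_r hr)
  have hlim := hnum.div hden (mul_pos (by norm_num) h.m_sub_one_sq_div_pos).ne'
  rw [show (m * 1 + (m - 1) * 0) / ((1 + 1) * ((m - 1) ^ 2 / m)) = (m / (m - 1)) ^ 2 / 2 by
    field_simp; ring] at hlim
  refine hlim.congr fun n => ?_
  have hv := hpos n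
  have hv_succ := hpos (n + 1)
  have hr_pos := h.r_pos n
  rw [sq_sub_sq, mul_comm (_ + _), ← div_div, h.one_sub_p_sub_div_excess_sub]
  simp only [Pi.div_apply]
  field_simp

lemma tendsto_excess_sub_div_mul (h : IsOrbit m r p) (hr : Tendsto r atTop (𝓝 (1 - 1 / m))) :
    Tendsto (fun n => (excess m r n - excess m r (n + 1)) / (excess m r n * excess m r (n + 1)))
      atTop (𝓝 (m / 2)) := by
  have hm := h.m_pos.ne'
  have hm_sub := h.m_sub_one_pos.ne'
  have hlim := (((h.tendsto_m_sub_one_mul_r hr).comp (tendsto_add_atTop_nat 1)).mul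
    (h.tendsto_one_sub_p_div_excess_sq hr)).div (h.tendsto_excess_succ_div_excess hr) one_ne_zero
  rw [show (m - 1) ^ 2 / m * ((m / (m - 1)) ^ 2 / 2) / 1 = m / 2 by field_simp] at hlim
  refine hlim.congr fun n => ?_
  have hv := h.excess_pos hr n
  simp only [Pi.div_apply, Function.comp_apply, h.excess_sub_excess_succ]
  field_simp

end IsOrbit

/-- In the critical case (`r_n → 1 - 1/m`), setting
`v_n = r_n - (1 - 1/m)`, one has `n v_n → 2/m`, `n² (v_n - v_{n+1}) → 2/m` and
`(m/2) n² v_n v_{n+1} → 2/m`. -/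
theorem stmt17 (m : ℝ) (hm : 1 < m) (r p : ℕ → ℝ)
    (hmem : ∀ n, r n ∈ Set.Ioo (0 : ℝ) 1 ∧ p n ∈ Set.Ioo (0 : ℝ) 1)
    (hdec : ∀ n, r (n + 1) < r n)
    (hrec_r : ∀ n, r (n + 1) = r n / (m - (m - 1) * p n))
    (hrec_p : ∀ n, p (n + 1) = 1 - (1 - r (n + 1)) * (1 - r (n + 1) * p n / r n))
    (hrlim : Tendsto r atTop (𝓝 (1 - 1 / m)))
    (v : ℕ → ℝ) (hv : ∀ n, v n = r n - (1 - 1 / m)) :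
    Tendsto (fun n : ℕ => (n : ℝ) * v n) atTop (𝓝 (2 / m)) ∧
    Tendsto (fun n : ℕ => (n : ℝ) ^ 2 * (v n - v (n + 1))) atTop (𝓝 (2 / m)) ∧
    Tendsto (fun n : ℕ => m / 2 * ((n : ℝ) ^ 2 * (v n * v (n + 1)))) atTop (𝓝 (2 / m)) := by
  have horbit : IsOrbit m r p :=
    ⟨hm, fun n => (hmem n).1.1, fun n => (hmem n).2.2, hrec_r, hrec_p⟩
  obtain rfl : v = excess m r := funext hv
  have hv_ne : ∀ n, excess m r n ≠ 0 := fun n => (horbit.excess_pos hrlim n).ne'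
  have hm_ne : m / 2 ≠ 0 := by positivity
  have hlim := horbit.tendsto_excess_sub_div_mul hrlim
  have hmul := tendsto_natCast_mul_of_tendsto_sub_div_mul hv_ne hm_ne hlim
  have hsub := tendsto_natCast_sq_mul_sub_of_tendsto_sub_div_mul hv_ne hm_ne hlim
  have hprod := (tendsto_natCast_sq_mul_mul_succ hmul).const_mul (m / 2)
  rw [inv_div] at hmul hsub hprod
  rw [show m / 2 * (2 / m) ^ 2 = 2 / m by field_simp] at hprod
  exact ⟨hmul, hsub, hprod⟩
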